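/- Let A, B, C be nonempty finite sets with |C| = |B|, and let f : A × B → C be such that for every a ∈ A the map b ↦ f(a, b) is injective; for σ ∈ C let φ_σ(a) denote the unique b ∈ B with f(a, b) = σ. Let (U, V) be uniformly distributed on A × B, let h₁ be a function from A to a finite set and h₂ a function from B to a finite set, and let η ≥ 0. If I(h₁(U); h₂(V) | f(U, V)) ≤ η, then there exists σ ∈ C such that I(h₁(U'); h₂(φ_σ(U'))) ≤ η, where U' is uniformly distributed on A and I denotes (conditional) mutual information with logarithms to base 2. -/

import Mathlib

/-- `nml2 x = -x * log₂ x`, the summand of base-2 Shannon entropy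
(with the convention `0 · log 0 = 0`). -/
noncomputable def nml2 (x : ℝ) : ℝ := -x * Real.logb 2 x

open Classical in
/-- Base-2 Shannon entropy of the random variable `X` defined on the finite
probability space `Ω` with probability mass function `p`. -/
noncomputable def entropy {Ω S : Type*} [Fintype Ω] [Fintype S]
    (p : Ω → ℝ) (X : Ω → S) : ℝ :=
  ∑ s : S, nml2 (∑ ω : Ω, if X ω = s then p ω else 0)

/-- Conditional Shannon entropy `H(X | Y)` (base 2). -/
noncomputable def condEntropy {Ω S T : Type*} [Fintype Ω] [Fintype S] [Fintype T]
    (p : Ω → ℝ) (X : Ω → S) (Y : Ω → T) : ℝ :=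
  entropy p (fun ω => (X ω, Y ω)) - entropy p Y

/-- Mutual information `I(X; Y)` (base 2). -/
noncomputable def mutualInfo {Ω S T : Type*} [Fintype Ω] [Fintype S] [Fintype T]
    (p : Ω → ℝ) (X : Ω → S) (Y : Ω → T) : ℝ :=
  entropy p X + entropy p Y - entropy p (fun ω => (X ω, Y ω))

/-- Conditional mutual information `I(X; Y | Z)` (base 2). -/
noncomputable def condMutualInfo {Ω S T W : Type*} [Fintype Ω] [Fintype S] [Fintype T]
    [Fintype W] (p : Ω → ℝ) (X : Ω → S) (Y : Ω → T) (Z : Ω → W) : ℝ :=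
  entropy p (fun ω => (X ω, Z ω)) + entropy p (fun ω => (Y ω, Z ω))
    - entropy p (fun ω => ((X ω, Y ω), Z ω)) - entropy p Z

theorem nml2_div (x : ℝ) {n : ℝ} (hn : n ≠ 0) :
    nml2 (x / n) = nml2 x / n + x / n * Real.logb 2 n := by
  unfold nml2
  rcases eq_or_ne x 0 with rfl | hx
  · simp
  · rw [Real.logb_div hx hn]
    ring

open Classical in
theorem sum_distribution {Ω S : Type*} [Fintype Ω] [Fintype S] (q : Ω → ℝ) (X : Ω → S) :
    ∑ s : S, ∑ ω : Ω, (if X ω = s then q ω else 0) = ∑ ω : Ω, q ω := by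
  rw [Finset.sum_comm]
  simp

section

variable {A B C : Type*} [Fintype A] [Fintype B]
  {f : A × B → C} {φ : C → A → B}

open Classical in
theorem sum_fiber_eq (hinj : ∀ a : A, Function.Injective (fun b => f (a, b)))
    (hφ : ∀ (σ : C) (a : A), f (a, φ σ a) = σ) (g : A × B → ℝ) (c : C) :
    ∑ ω : A × B, (if f ω = c then g ω else 0) = ∑ a : A, g (a, φ c a) := by
  have hiff (a : A) (b : B) : f (a, b) = c ↔ b = φ c a :=
    ⟨fun h => hinj a (h.trans (hφ c a).symm), fun h => h ▸ hφ c a⟩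
  simp [Fintype.sum_prod_type, hiff]

/-- If `f (a, ·)` is a bijection `B ≃ C` for every `a`, and the `B`-coordinate is uniform and
independent of the `A`-coordinate, then the entropy of `f` is `log₂ |C|`. -/
theorem entropy_eq_logb_card [Fintype C] [Nonempty C]
    (hinj : ∀ a : A, Function.Injective (fun b => f (a, b)))
    (hφ : ∀ (σ : C) (a : A), f (a, φ σ a) = σ)
    {q : A → ℝ} (hq : ∑ a, q a = 1) :
    entropy (fun ω : A × B => q ω.1 / Fintype.card C) f = Real.logb 2 (Fintype.card C) := by
  have hC : (Fintype.card C : ℝ) ≠ 0 := by simp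
  simp only [entropy, sum_fiber_eq hinj hφ, ← Finset.sum_div, hq, nml2_div _ hC]
  simp [nml2, hC]

/-- The chain rule `H(X, f) = log₂ |C| + H(X | f)`, with the conditional entropy written as the
average over `σ` of the entropy of `X` on the fiber `f = σ`. -/
theorem entropy_prodMk_eq [Fintype C] [Nonempty C]
    (hinj : ∀ a : A, Function.Injective (fun b => f (a, b)))
    (hφ : ∀ (σ : C) (a : A), f (a, φ σ a) = σ)
    {q : A → ℝ} (hq : ∑ a, q a = 1) {S : Type*} [Fintype S] (X : A × B → S) :
    entropy (fun ω : A × B => q ω.1 / Fintype.card C) (fun ω => (X ω, f ω)) =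
      (∑ σ : C, entropy q (fun a => X (a, φ σ a))) / Fintype.card C
        + Real.logb 2 (Fintype.card C) := by
  classical
  have hC : (Fintype.card C : ℝ) ≠ 0 := by simp
  have hmass (s : S) (c : C) :
      ∑ ω : A × B, (if (X ω, f ω) = (s, c) then q ω.1 / (Fintype.card C : ℝ) else 0) =
        (∑ a : A, if X (a, φ c a) = s then q a else 0) / Fintype.card C := by
    rw [Finset.sum_div,
      ← Finset.sum_congr rfl fun a _ => (ite_div (X (a, φ c a) = s) (q a) 0 _).symm]
    simp only [zero_div]
    rw [← sum_fiber_eq hinj hφ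
      (fun ω => if X ω = s then q ω.1 / (Fintype.card C : ℝ) else 0) c]
    refine Finset.sum_congr rfl fun ω _ => ?_
    simp only [Prod.mk.injEq, and_comm (a := X ω = s), ite_and]
  have hsum (σ : C) :
      ∑ s : S, nml2 ((∑ a : A, if X (a, φ σ a) = s then q a else 0) / Fintype.card C) =
        entropy q (fun a => X (a, φ σ a)) / Fintype.card C
          + 1 / Fintype.card C * Real.logb 2 (Fintype.card C) := by
    simp only [nml2_div _ hC, Finset.sum_add_distrib, ← Finset.sum_div, ← Finset.sum_mul,
      sum_distribution, hq, entropy]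
  have hmain : entropy (fun ω : A × B => q ω.1 / Fintype.card C) (fun ω => (X ω, f ω)) =
      ∑ σ : C, ∑ s : S,
        nml2 ((∑ a : A, if X (a, φ σ a) = s then q a else 0) / Fintype.card C) := by
    rw [Finset.sum_comm, entropy, Fintype.sum_prod_type]
    refine Finset.sum_congr rfl fun s _ => Finset.sum_congr rfl fun c _ => ?_
    rw [← hmass]
    congr!
  rw [hmain, Finset.sum_congr rfl fun σ _ => hsum σ, Finset.sum_add_distrib, ← Finset.sum_div]
  simp [hC]

/-- Conditional mutual information given `f` is the average of the mutual informations on the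
fibers `f = σ`. -/
theorem condMutualInfo_eq_average [Fintype C] [Nonempty C]
    (hinj : ∀ a : A, Function.Injective (fun b => f (a, b)))
    (hφ : ∀ (σ : C) (a : A), f (a, φ σ a) = σ)
    {q : A → ℝ} (hq : ∑ a, q a = 1) {S T : Type*} [Fintype S] [Fintype T]
    (X : A × B → S) (Y : A × B → T) :
    condMutualInfo (fun ω : A × B => q ω.1 / Fintype.card C) X Y f =
      (∑ σ : C, mutualInfo q (fun a => X (a, φ σ a)) (fun a => Y (a, φ σ a)))
        / Fintype.card C := by
  simp only [condMutualInfo, mutualInfo, entropy_prodMk_eq hinj hφ hq X,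
    entropy_prodMk_eq hinj hφ hq Y, entropy_prodMk_eq hinj hφ hq (fun ω => (X ω, Y ω)),
    entropy_eq_logb_card hinj hφ hq, Finset.sum_sub_distrib, Finset.sum_add_distrib]
  ring

end

/- Mathematical core of Part 2a of Theorem 2: with `(U, V)` uniform on `A × B`,
`|C| = |B|`, each `b ↦ f (a, b)` injective with inverse `φ σ`, if the index code
leaks at most `η` given the broadcast codeword, i.e.
`I(h₁(U); h₂(V) | f(U, V)) ≤ η`, then some `σ` can be hard-wired so that the
derived deterministic network code leaks at most `η`:
`I(h₁(U'); h₂(φ σ U')) ≤ η` with `U'` uniform on `A`. -/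
theorem stmt9 {A B C : Type*} [Fintype A] [Fintype B] [Fintype C]
    [Nonempty A] [Nonempty B] [Nonempty C]
    (hcard : Fintype.card C = Fintype.card B)
    (f : A × B → C)
    (hinj : ∀ a : A, Function.Injective (fun b => f (a, b)))
    (φ : C → A → B) (hφ : ∀ (σ : C) (a : A), f (a, φ σ a) = σ)
    {T1 T2 : Type*} [Fintype T1] [Fintype T2]
    (h₁ : A → T1) (h₂ : B → T2) (η : ℝ) (hη : 0 ≤ η)
    (hsec : condMutualInfo
        (fun _ : A × B => (1 : ℝ) / ((Fintype.card A : ℝ) * (Fintype.card B : ℝ)))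
        (fun ab => h₁ ab.1) (fun ab => h₂ ab.2) f ≤ η) :
    ∃ σ : C, mutualInfo (fun _ : A => (1 : ℝ) / (Fintype.card A : ℝ))
        h₁ (fun a => h₂ (φ σ a)) ≤ η := by
  have hq : ∑ _a : A, (1 : ℝ) / Fintype.card A = 1 := by simp
  have hC : (0 : ℝ) < Fintype.card C := by exact_mod_cast Fintype.card_pos
  simp only [← hcard, ← div_div] at hsec
  rw [condMutualInfo_eq_average hinj hφ hq, div_le_iff₀ hC] at hsec
  obtain ⟨σ, -, hσ⟩ := Finset.exists_le_of_sum_le (s := Finset.univ) (g := fun _ : C => η)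
    Finset.univ_nonempty (hsec.trans_eq (by simp [mul_comm]))
  exact ⟨σ, hσ⟩
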